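/- arXiv:1909.11798 — 5 statements merged into one kernel-verified Lean document; each statement's English description precedes it below -/
import Mathlib

section
/- Let f : ℝⁿ → ℝⁿ be continuously differentiable, let φ : ℝ × ℝⁿ × ℝ → ℝ satisfy a uniform Lipschitz condition |φ(t, y, r₁) − φ(t, y, r₂)| ≤ K·|r₁ − r₂| in its last argument, and let x : [0, T] → ℝⁿ be differentiable with x′(t) = f(x(t)). If ρ₁ and ρ₂ are two continuously differentiable solutions of the Liouville equation ∂ρ/∂t(t, y) + div_y(ρ(t, ·)·f)(y) = φ(t, y, ρ(t, y)) on [0, T] × ℝⁿ with ρ₁(0, x(0)) = ρ₂(0, x(0)), then ρ₁(t, x(t)) = ρ₂(t, x(t)) for all t ∈ [0, T]. -/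
noncomputable section

open Set

/-- Divergence of a vector field on `ℝⁿ`: trace of the total derivative. -/
def diverg {n : ℕ} (w : EuclideanSpace ℝ (Fin n) → EuclideanSpace ℝ (Fin n))
    (y : EuclideanSpace ℝ (Fin n)) : ℝ :=
  LinearMap.trace ℝ (EuclideanSpace ℝ (Fin n)) (fderiv ℝ w y)

/-!
Expanding `∇·(ρ f) = ∇ρ · f + ρ ∇·f` turns the Liouville equation into a statement about the
directional derivative of `ρ` along `(1, f)`, so that along a trajectory of `ẋ = f(t, x)` it becomes
the scalar ordinary differential equation `ρ̇ = φ(t, x, ρ) - (∇·f) ρ`. As `∇·f` is bounded along the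
trajectory, the right-hand side is Lipschitz in `ρ` uniformly in time, and solutions of such an
equation are determined by their initial values.
-/

open scoped NNReal

section Divergence

variable {𝕜 E : Type*} [NontriviallyNormedField 𝕜] [NormedAddCommGroup E] [NormedSpace 𝕜 E]

variable (𝕜) in
/-- Divergence of a vector field on a normed space, as the trace of its derivative. It extends
`diverg` beyond Euclidean space; it is only meaningful in finite dimension, `LinearMap.trace`
being `0` on modules without a finite basis. -/
def divergence (w : E → E) (y : E) : 𝕜 :=
  LinearMap.trace 𝕜 E (fderiv 𝕜 w y)

theorem divergence_smul [FiniteDimensional 𝕜 E] {g : E → 𝕜} {w : E → E} {y : E}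
    (hg : DifferentiableAt 𝕜 g y) (hw : DifferentiableAt 𝕜 w y) :
    divergence 𝕜 (fun z => g z • w z) y = g y * divergence 𝕜 w y + fderiv 𝕜 g y (w y) := by
  have trace_smulRight :
      LinearMap.trace 𝕜 E ((fderiv 𝕜 g y).smulRight (w y)) = fderiv 𝕜 g y (w y) :=
    LinearMap.trace_smulRight (fderiv 𝕜 g y : E →ₗ[𝕜] 𝕜) (w y)
  simp only [divergence, fderiv_fun_smul hg hw, ContinuousLinearMap.toLinearMap_add,
    ContinuousLinearMap.toLinearMap_smul, map_add, map_smul, smul_eq_mul, trace_smulRight]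

theorem continuous_divergence [CompleteSpace 𝕜] [FiniteDimensional 𝕜 E] {w : E → E}
    (hw : ContDiff 𝕜 1 w) : Continuous (divergence 𝕜 w) := by
  have continuous_trace :
      Continuous (LinearMap.trace 𝕜 E ∘ₗ ContinuousLinearMap.coeLM 𝕜 : (E →L[𝕜] E) →ₗ[𝕜] 𝕜) :=
    LinearMap.continuous_of_finiteDimensional _
  exact continuous_trace.comp (hw.continuous_fderiv one_ne_zero)

end Divergence

theorem fderiv_apply_one_eq_deriv_add_fderiv {𝕜 E F : Type*} [NontriviallyNormedField 𝕜]
    [NormedAddCommGroup E] [NormedSpace 𝕜 E] [NormedAddCommGroup F] [NormedSpace 𝕜 F]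
    {ρ : 𝕜 × E → F} {t : 𝕜} {y : E} (hρ : DifferentiableAt 𝕜 ρ (t, y)) (v : E) :
    fderiv 𝕜 ρ (t, y) (1, v) =
      deriv (fun s => ρ (s, y)) t + fderiv 𝕜 (fun z => ρ (t, z)) y v := by
  have deriv_time : HasDerivAt (fun s => ρ (s, y)) (fderiv 𝕜 ρ (t, y) (1, 0)) t :=
    hρ.hasFDerivAt.comp_hasDerivAt (f := fun s => (s, y)) t
      ((hasDerivAt_id t).prodMk (hasDerivAt_const t y))
  have fderiv_space : HasFDerivAt (fun z => ρ (t, z))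
      (fderiv 𝕜 ρ (t, y) ∘L ContinuousLinearMap.inr 𝕜 𝕜 E) y :=
    hρ.hasFDerivAt.comp (f := fun z => (t, z)) y (hasFDerivAt_prodMk_right t y)
  rw [deriv_time.deriv, fderiv_space.fderiv, ContinuousLinearMap.comp_apply,
    ContinuousLinearMap.inr_apply, ← map_add, Prod.mk_add_mk, add_zero, zero_add]

section Liouville

variable {E : Type*} [NormedAddCommGroup E] [NormedSpace ℝ E]

/-- The left-hand side `∂ρ/∂t + ∇·(ρ f)` of the Liouville equation at `(t, y)`, for a vector field
`f` that may depend on time; `∇·` is taken in the space variable only. -/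
def liouvilleOperator (f : ℝ → E → E) (ρ : ℝ × E → ℝ) (t : ℝ) (y : E) : ℝ :=
  deriv (fun s => ρ (s, y)) t + divergence ℝ (fun z => ρ (t, z) • f t z) y

variable [FiniteDimensional ℝ E] {f : ℝ → E → E} {x : ℝ → E}

theorem liouvilleOperator_eq_fderiv_add {ρ : ℝ × E → ℝ} {t : ℝ} {y : E}
    (hρ : DifferentiableAt ℝ ρ (t, y)) (hf : DifferentiableAt ℝ (f t) y) :
    liouvilleOperator f ρ t y =
      fderiv ℝ ρ (t, y) (1, f t y) + divergence ℝ (f t) y * ρ (t, y) := by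
  have hρ_space : DifferentiableAt ℝ (fun z => ρ (t, z)) y :=
    hρ.comp (f := fun z => (t, z)) y (hasFDerivAt_prodMk_right t y).differentiableAt
  rw [liouvilleOperator, divergence_smul hρ_space hf, fderiv_apply_one_eq_deriv_add_fderiv hρ]
  ring

theorem hasDerivWithinAt_along_trajectory {ρ : ℝ × E → ℝ} {s : Set ℝ} {t : ℝ}
    (hρ : DifferentiableAt ℝ ρ (t, x t)) (hf : DifferentiableAt ℝ (f t) (x t))
    (hx : HasDerivWithinAt x (f t (x t)) s t) :
    HasDerivWithinAt (fun τ => ρ (τ, x τ))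
      (liouvilleOperator f ρ t (x t) - divergence ℝ (f t) (x t) * ρ (t, x t)) s t := by
  rw [liouvilleOperator_eq_fderiv_add hρ hf, add_sub_cancel_right]
  exact hρ.hasFDerivAt.comp_hasDerivWithinAt (f := fun τ => (τ, x τ)) t
    ((hasDerivWithinAt_id t s).prodMk hx)

theorem liouville_uniqueness_along_trajectory_general {a b M : ℝ} {K : ℝ≥0}
    {φ : ℝ → E → ℝ → ℝ} {ρ₁ ρ₂ : ℝ × E → ℝ}
    (hf : ∀ t ∈ Ico a b, DifferentiableAt ℝ (f t) (x t))
    (hdiv : ∀ t ∈ Ico a b, ‖divergence ℝ (f t) (x t)‖ ≤ M)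
    (hφ : ∀ t ∈ Ico a b, LipschitzWith K (φ t (x t)))
    (hx : ContinuousOn x (Icc a b))
    (hx' : ∀ t ∈ Ico a b, HasDerivWithinAt x (f t (x t)) (Ici t) t)
    (hρ₁ : ∀ t ∈ Icc a b, DifferentiableAt ℝ ρ₁ (t, x t))
    (hρ₂ : ∀ t ∈ Icc a b, DifferentiableAt ℝ ρ₂ (t, x t))
    (hliouville₁ : ∀ t ∈ Ico a b, liouvilleOperator f ρ₁ t (x t) = φ t (x t) (ρ₁ (t, x t)))
    (hliouville₂ : ∀ t ∈ Ico a b, liouvilleOperator f ρ₂ t (x t) = φ t (x t) (ρ₂ (t, x t)))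
    (ha : ρ₁ (a, x a) = ρ₂ (a, x a)) :
    EqOn (fun t => ρ₁ (t, x t)) (fun t => ρ₂ (t, x t)) (Icc a b) := by
  let v : ℝ → ℝ → ℝ := fun t r => φ t (x t) r - divergence ℝ (f t) (x t) * r
  have lipschitz_v : ∀ t ∈ Ico a b, LipschitzWith (K + M.toNNReal) (v t) := fun t ht =>
    (hφ t ht).sub ((lipschitzWith_smul (divergence ℝ (f t) (x t))).weaken
      (NNReal.le_toNNReal_of_coe_le (hdiv t ht)))
  have continuousOn_along {ρ : ℝ × E → ℝ} (hρ : ∀ t ∈ Icc a b, DifferentiableAt ℝ ρ (t, x t)) :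
      ContinuousOn (fun t => ρ (t, x t)) (Icc a b) := fun t ht =>
    (hρ t ht).continuousAt.comp_continuousWithinAt (f := fun τ => (τ, x τ))
      (continuousWithinAt_id.prodMk (hx t ht))
  have solves_ode {ρ : ℝ × E → ℝ} (hρ : ∀ t ∈ Icc a b, DifferentiableAt ℝ ρ (t, x t))
      (hliouville : ∀ t ∈ Ico a b, liouvilleOperator f ρ t (x t) = φ t (x t) (ρ (t, x t))) :
      ∀ t ∈ Ico a b,
        HasDerivWithinAt (fun τ => ρ (τ, x τ)) (v t (ρ (t, x t))) (Ici t) t := fun t ht => by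
    simpa only [hliouville t ht] using
      hasDerivWithinAt_along_trajectory (hρ t (Ico_subset_Icc_self ht)) (hf t ht) (hx' t ht)
  exact ODE_solution_unique_of_mem_Icc_right (s := fun _ => univ)
    (fun t ht => (lipschitz_v t ht).lipschitzOnWith)
    (continuousOn_along hρ₁) (solves_ode hρ₁ hliouville₁) (fun _ _ => mem_univ _)
    (continuousOn_along hρ₂) (solves_ode hρ₂ hliouville₂) (fun _ _ => mem_univ _) ha

end Liouville

/-- Uniqueness of the value of a Liouville solution along a trajectory of
`ẋ = f(x)`, given the value at the initial point of the trajectory: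
if `φ` is uniformly Lipschitz in its last argument, any two `C¹` solutions of
`∂ρ/∂t + ∇·(ρ f) = φ(t, x, ρ)` agreeing at `(0, x 0)` agree along `x` on `[0, T]`. -/
theorem liouville_uniqueness_along_trajectory {n : ℕ} (T : ℝ) (hT : 0 ≤ T)
    (f : EuclideanSpace ℝ (Fin n) → EuclideanSpace ℝ (Fin n))
    (hf : ContDiff ℝ 1 f)
    (φ : ℝ → EuclideanSpace ℝ (Fin n) → ℝ → ℝ) (K : ℝ)
    (hφ : ∀ (t : ℝ) (y : EuclideanSpace ℝ (Fin n)) (r₁ r₂ : ℝ),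
      |φ t y r₁ - φ t y r₂| ≤ K * |r₁ - r₂|)
    (x : ℝ → EuclideanSpace ℝ (Fin n))
    (hx : ∀ t ∈ Icc (0 : ℝ) T, HasDerivAt x (f (x t)) t)
    (ρ₁ ρ₂ : ℝ × EuclideanSpace ℝ (Fin n) → ℝ)
    (hρ₁ : ContDiff ℝ 1 ρ₁) (hρ₂ : ContDiff ℝ 1 ρ₂)
    (hliouville₁ : ∀ t ∈ Icc (0 : ℝ) T, ∀ (y : EuclideanSpace ℝ (Fin n)),
      deriv (fun s => ρ₁ (s, y)) t + diverg (fun z => ρ₁ (t, z) • f z) y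
        = φ t y (ρ₁ (t, y)))
    (hliouville₂ : ∀ t ∈ Icc (0 : ℝ) T, ∀ (y : EuclideanSpace ℝ (Fin n)),
      deriv (fun s => ρ₂ (s, y)) t + diverg (fun z => ρ₂ (t, z) • f z) y
        = φ t y (ρ₂ (t, y)))
    (h0 : ρ₁ (0, x 0) = ρ₂ (0, x 0)) :
    ∀ t ∈ Icc (0 : ℝ) T, ρ₁ (t, x t) = ρ₂ (t, x t) := by
  have hxc : ContinuousOn x (Icc 0 T) := HasDerivAt.continuousOn hx
  obtain ⟨M, hM⟩ := isCompact_Icc.exists_bound_of_continuousOn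
    ((continuous_divergence hf).comp_continuousOn hxc)
  have hIco : ∀ t ∈ Ico 0 T, t ∈ Icc 0 T := fun _ ht => Ico_subset_Icc_self ht
  exact liouville_uniqueness_along_trajectory_general (f := fun _ => f)
    (fun _ _ => hf.differentiable one_ne_zero _) (fun t ht => hM t (hIco t ht))
    (fun t _ => LipschitzWith.of_dist_le' (hφ t (x t))) hxc
    (fun t ht => (hx t (hIco t ht)).hasDerivWithinAt)
    (fun _ _ => hρ₁.differentiable one_ne_zero _) (fun _ _ => hρ₂.differentiable one_ne_zero _)
    (fun t ht => hliouville₁ t (hIco t ht) (x t)) (fun t ht => hliouville₂ t (hIco t ht) (x t)) h0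
end
end

section
/- Let w : ℝⁿ → ℝⁿ be continuously differentiable, with w integrable on ℝⁿ and with the map x ↦ ‖Dw(x)‖ (operator norm of the total derivative) integrable on ℝⁿ. Then ∫_{ℝⁿ} (div w)(x) dx = 0, where div w denotes the divergence of w (the trace of its derivative). -/
noncomputable section

open MeasureTheory

section IntegralDerivative

variable {E F : Type*} [NormedAddCommGroup E] [NormedSpace ℝ E] [FiniteDimensional ℝ E]
  [MeasurableSpace E] [BorelSpace E] {μ : Measure E} [μ.IsAddHaarMeasure]
  [NormedAddCommGroup F] [NormedSpace ℝ F]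

theorem integral_eq_zero_of_hasLineDerivAt {f f' : E → F} {v : E}
    (hf : ∀ x, HasLineDerivAt ℝ f (f' x) x v) (hf_int : Integrable f μ)
    (hf'_int : Integrable f' μ) : ∫ x, f' x ∂μ = 0 := by
  simpa using integral_bilinear_hasLineDerivAt_right_eq_neg_left_of_integrable
    (μ := μ) (f := fun _ ↦ (1 : ℝ)) (f' := fun _ ↦ 0) (g := f) (g' := f') (v := v)
    (B := ContinuousLinearMap.lsmul ℝ ℝ) (by simp) (by simpa using hf'_int) (by simpa using hf_int)
    (fun x _ ↦ (hasFDerivAt_const (1 : ℝ) x).hasLineDerivAt v) (fun x _ ↦ hf x)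

theorem integral_fderiv_eq_zero {w : E → F} (hw : Differentiable ℝ w)
    (hw_int : Integrable w μ) (hDw_int : Integrable (fderiv ℝ w) μ) :
    ∫ x, fderiv ℝ w x ∂μ = 0 := by
  ext v
  rw [ContinuousLinearMap.integral_apply hDw_int]
  exact integral_eq_zero_of_hasLineDerivAt (fun x ↦ (hw x).hasFDerivAt.hasLineDerivAt v)
    hw_int (hDw_int.apply_continuousLinearMap v)

theorem integral_div_eq_zero_general {w : E → E} (hw : Differentiable ℝ w)
    (hw_int : Integrable w μ) (hDw_int : Integrable (fderiv ℝ w) μ) :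
    ∫ x, LinearMap.trace ℝ E (fderiv ℝ w x) ∂μ = 0 := by
  let traceCLM : (E →L[ℝ] E) →L[ℝ] ℝ :=
    (LinearMap.trace ℝ E ∘ₗ ContinuousLinearMap.coeLM ℝ).toContinuousLinearMap
  calc ∫ x, traceCLM (fderiv ℝ w x) ∂μ
    _ = traceCLM (∫ x, fderiv ℝ w x ∂μ) := traceCLM.integral_comp_comm hDw_int
    _ = 0 := by rw [integral_fderiv_eq_zero hw hw_int hDw_int, map_zero]

end IntegralDerivative

/-- Decay-at-infinity version of Lemma 1's conclusion: for a `C¹` vector field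
that is integrable together with its derivative, the integral of the divergence
over all of `ℝⁿ` vanishes. -/
theorem integral_div_eq_zero {n : ℕ}
    (w : EuclideanSpace ℝ (Fin n) → EuclideanSpace ℝ (Fin n))
    (hw : ContDiff ℝ 1 w)
    (hw_int : Integrable w)
    (hDw_int : Integrable (fun x => ‖fderiv ℝ w x‖)) :
    ∫ x, diverg w x = 0 :=
  integral_div_eq_zero_general (hw.differentiable one_ne_zero) hw_int <|
    (integrable_norm_iff (hw.continuous_fderiv one_ne_zero).aestronglyMeasurable).1 hDw_int
end
end

section
/- Let U be a nonempty set, F : ℝⁿ × U → ℝⁿ, C : ℝⁿ × U → ℝ, κ > 0, and let V : ℝⁿ → ℝ be continuously differentiable and bounded, satisfying the Hamilton–Jacobi–Bellman inequality C(y, u) + ⟪∇V(y), F(y, u)⟫ − κ·V(y) ≥ 0 for all y ∈ ℝⁿ and u ∈ U. Let x : [0, ∞) → ℝⁿ be differentiable and u : [0, ∞) → U be such that x′(t) = F(x(t), u(t)) for all t ≥ 0, the map t ↦ C(x(t), u(t)) is continuous, and t ↦ e^{−κt}·C(x(t), u(t)) is integrable on [0, ∞). Then ∫₀^∞ e^{−κt}·C(x(t),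 u(t)) dt ≥ V(x(0)). -/
noncomputable section

open MeasureTheory Set Real

/-!
By the Hamilton–Jacobi–Bellman inequality, the discounted value `e^{-κt} V(x(t))` decreases along a
trajectory at most at the rate `e^{-κt} C(x(t), u(t))`. Integrating over `[0, T]` gives
`V(x(0)) - e^{-κT} V(x(T)) ≤ ∫₀ᵀ e^{-κt} C(x(t), u(t)) dt`, and the boundary term at `T` does not
survive the limit `T → ∞` as soon as it is at most `ε` for arbitrarily large `T`.
-/

open Filter Topology

section Scalar

variable {κ a : ℝ} {φ φ' c : ℝ → ℝ}

lemma hasDerivWithinAt_exp_neg_mul_mul {s : Set ℝ} {t d : ℝ} (hφ : HasDerivWithinAt φ d s t) :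
    HasDerivWithinAt (fun t => exp (-κ * t) * φ t) (exp (-κ * t) * (d - κ * φ t)) s t := by
  have hexp : HasDerivAt (fun t => exp (-κ * t)) (exp (-κ * t) * -κ) t := by
    simpa only [mul_one] using ((hasDerivAt_id' t).const_mul (-κ)).exp
  exact (hexp.hasDerivWithinAt.mul hφ).congr_deriv (by ring)

lemma exp_neg_mul_mul_sub_le_integral {b : ℝ} (hab : a ≤ b) (hφ : ContinuousOn φ (Icc a b))
    (hφ' : ∀ t ∈ Ioo a b, HasDerivWithinAt φ (φ' t) (Ioi t) t)
    (hint : IntegrableOn (fun t => exp (-κ * t) * c t) (Icc a b))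
    (hc : ∀ t ∈ Ioo a b, κ * φ t - φ' t ≤ c t) :
    exp (-κ * a) * φ a - exp (-κ * b) * φ b ≤ ∫ t in a..b, exp (-κ * t) * c t := by
  have hcont : ContinuousOn (fun t => -(exp (-κ * t) * φ t)) (Icc a b) := by fun_prop
  have hrate : ∀ t ∈ Ioo a b, -(exp (-κ * t) * (φ' t - κ * φ t)) ≤ exp (-κ * t) * c t := by
    intro t ht
    rw [← mul_neg, neg_sub]
    exact mul_le_mul_of_nonneg_left (hc t ht) (exp_pos _).le
  have h := intervalIntegral.sub_le_integral_of_hasDeriv_right_of_le hab hcont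
    (fun t ht => (hasDerivWithinAt_exp_neg_mul_mul (hφ' t ht)).neg) hint hrate
  linarith

lemma exp_neg_mul_mul_le_integral_Ioi (hφ : ContinuousOn φ (Ici a))
    (hφ' : ∀ t ∈ Ioi a, HasDerivWithinAt φ (φ' t) (Ioi t) t)
    (hint : IntegrableOn (fun t => exp (-κ * t) * c t) (Ioi a))
    (hc : ∀ t ∈ Ioi a, κ * φ t - φ' t ≤ c t)
    (hend : ∀ ε > 0, ∃ᶠ T in atTop, exp (-κ * T) * φ T ≤ ε) :
    exp (-κ * a) * φ a ≤ ∫ t in Ioi a, exp (-κ * t) * c t := by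
  refine le_of_forall_pos_le_add fun ε hε => sub_le_iff_le_add.mp ?_
  refine ge_of_tendsto_of_frequently (intervalIntegral_tendsto_integral_Ioi a hint tendsto_id) ?_
  refine ((hend ε hε).and_eventually (eventually_ge_atTop a)).mono ?_
  rintro T ⟨hT, haT⟩
  have hintT : IntegrableOn (fun t => exp (-κ * t) * c t) (Icc a T) :=
    (Iff.mpr integrableOn_Ici_iff_integrableOn_Ioi hint).mono_set Icc_subset_Ici_self
  calc exp (-κ * a) * φ a - ε ≤ exp (-κ * a) * φ a - exp (-κ * T) * φ T := by gcongr
    _ ≤ ∫ t in a..T, exp (-κ * t) * c t :=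
      exp_neg_mul_mul_sub_le_integral haT (hφ.mono Icc_subset_Ici_self)
        (fun t ht => hφ' t ht.1) hintT (fun t ht => hc t ht.1)

lemma eventually_exp_neg_mul_mul_le {M ε : ℝ} (hκ : 0 < κ) (hφ : ∀ᶠ T in atTop, φ T ≤ M)
    (hε : 0 < ε) : ∀ᶠ T in atTop, exp (-κ * T) * φ T ≤ ε := by
  have hexp : Tendsto (fun T => exp (-κ * T)) atTop (𝓝 0) :=
    tendsto_exp_atBot.comp (tendsto_id.const_mul_atTop_of_neg (neg_neg_of_pos hκ))
  have hlim : Tendsto (fun T => exp (-κ * T) * M) atTop (𝓝 0) := by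
    simpa only [zero_mul] using hexp.mul_const M
  filter_upwards [hφ, hlim.eventually_le_const hε] with T hφT hT
  exact (mul_le_mul_of_nonneg_left hφT (exp_pos _).le).trans hT

end Scalar

/-- The set `S` plays the role of a state constraint, and the one-sided derivative in `hx` admits
piecewise continuous controls. The condition `hend` is transversality,
`liminf e^{-κT} V(x(T)) ≤ 0`, spelled out because the real-valued `Filter.liminf` has junk values
on unbounded functions. -/
theorem hjb_verification_lower_bound_general {E U : Type*} [NormedAddCommGroup E]
    [NormedSpace ℝ E] {F : E → U → E} {C : E → U → ℝ} {κ : ℝ} {V : E → ℝ} {S : Set E}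
    (hV : ∀ y ∈ S, DifferentiableAt ℝ V y)
    (hHJB : ∀ y ∈ S, ∀ u, 0 ≤ C y u + fderiv ℝ V y (F y u) - κ * V y)
    {x : ℝ → E} {u : ℝ → U} (hxS : ∀ t ∈ Ici (0 : ℝ), x t ∈ S)
    (hxcont : ContinuousOn x (Ici 0))
    (hx : ∀ t ∈ Ioi (0 : ℝ), HasDerivWithinAt x (F (x t) (u t)) (Ioi t) t)
    (hint : IntegrableOn (fun t => exp (-κ * t) * C (x t) (u t)) (Ioi 0))
    (hend : ∀ ε > 0, ∃ᶠ T in atTop, exp (-κ * T) * V (x T) ≤ ε) :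
    V (x 0) ≤ ∫ t in Ioi 0, exp (-κ * t) * C (x t) (u t) := by
  have hVx : ContinuousOn (fun t => V (x t)) (Ici 0) := fun t ht =>
    (hV _ (hxS t ht)).continuousAt.comp_continuousWithinAt (hxcont t ht)
  have hVx' : ∀ t ∈ Ioi (0 : ℝ),
      HasDerivWithinAt (fun t => V (x t)) (fderiv ℝ V (x t) (F (x t) (u t))) (Ioi t) t :=
    fun t ht =>
      (hV _ (hxS t (Ioi_subset_Ici_self ht))).hasFDerivAt.comp_hasDerivWithinAt t (hx t ht)
  have hrate : ∀ t ∈ Ioi (0 : ℝ),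
      κ * V (x t) - fderiv ℝ V (x t) (F (x t) (u t)) ≤ C (x t) (u t) := fun t ht => by
    linarith [hHJB _ (hxS t (Ioi_subset_Ici_self ht)) (u t)]
  simpa only [mul_zero, exp_zero, one_mul] using
    exp_neg_mul_mul_le_integral_Ioi hVx hVx' hint hrate hend

/-- Verification-theorem lower bound: a bounded `C¹` function `V` satisfying the
Hamilton–Jacobi–Bellman inequality `C(y,u) + ⟪∇V(y), F(y,u)⟫ − κ V(y) ≥ 0`
lower-bounds the discounted cost of every admissible trajectory. -/
theorem hjb_verification_lower_bound {n : ℕ} {U : Type*} [Nonempty U]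
    (F : EuclideanSpace ℝ (Fin n) → U → EuclideanSpace ℝ (Fin n))
    (C : EuclideanSpace ℝ (Fin n) → U → ℝ) (κ : ℝ) (hκ : 0 < κ)
    (V : EuclideanSpace ℝ (Fin n) → ℝ) (hV : ContDiff ℝ 1 V)
    (hVbdd : ∃ M : ℝ, ∀ y, |V y| ≤ M)
    (hHJB : ∀ (y : EuclideanSpace ℝ (Fin n)) (u : U),
      C y u + inner ℝ (gradient V y) (F y u) - κ * V y ≥ 0)
    (x : ℝ → EuclideanSpace ℝ (Fin n)) (u : ℝ → U)
    (hx : ∀ t ∈ Ici (0 : ℝ), HasDerivWithinAt x (F (x t) (u t)) (Ici (0 : ℝ)) t)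
    (hCcont : ContinuousOn (fun t => C (x t) (u t)) (Ici (0 : ℝ)))
    (hint : IntegrableOn (fun t => Real.exp (-κ * t) * C (x t) (u t)) (Ici (0 : ℝ))) :
    ∫ t in Ici (0 : ℝ), Real.exp (-κ * t) * C (x t) (u t) ≥ V (x 0) := by
  obtain ⟨M, hM⟩ := hVbdd
  have hend : ∀ ε > 0, ∃ᶠ T in atTop, exp (-κ * T) * V (x T) ≤ ε := fun _ hε =>
    (eventually_exp_neg_mul_mul_le hκ (.of_forall fun T => le_of_abs_le (hM (x T))) hε).frequently
  rw [integral_Ici_eq_integral_Ioi]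
  exact hjb_verification_lower_bound_general (S := univ)
    (fun y _ => hV.differentiable one_ne_zero y)
    (fun y _ v => by simpa only [inner_gradient_left] using hHJB y v)
    (fun t _ => mem_univ (x t)) (fun t ht => (hx t ht).continuousWithinAt)
    (fun t ht => (hx t (Ioi_subset_Ici_self ht)).mono (Ioi_subset_Ici ht.le))
    (hint.mono_set Ioi_subset_Ici_self) hend
end
end

section
/- Let α : ℝ → ℝ be a continuous, strictly increasing function with α(0) = 0 (a class-K function), let b : ℝⁿ → ℝ be differentiable, and let x : [0, ∞) → ℝⁿ be differentiable with b(x(0)) ≥ 0 and satisfying the barrier condition ⟪∇b(x(t)), x′(t)⟫ + α(b(x(t))) ≥ 0 for all t ≥ 0. Then b(x(t)) ≥ 0 for all t ≥ 0; in particular the set {y : b(y) ≥ 0} is forward invariant along the trajectory. -/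
noncomputable section

open Set

/-!
Wherever `b ∘ x` is negative, `α (b (x t)) ≤ 0`, so the barrier condition makes its slope
nonnegative. Raise `b ∘ x` by `ε * (1 + t - t₀)`: where the raised function vanishes, `b ∘ x` is
negative, so the raised slope is at least `ε > 0`. A function that starts nonnegative and has
positive slope at each of its zeros stays nonnegative; let `ε → 0`.
-/

theorem image_le_of_deriv_right_le_of_boundary_lt {f f' B B' : ℝ → ℝ} {a b : ℝ}
    (hf : ContinuousOn f (Icc a b)) (hf' : ∀ t ∈ Ico a b, HasDerivWithinAt f (f' t) (Ici t) t)
    (ha : f a ≤ B a) (hB : ContinuousOn B (Icc a b))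
    (hB' : ∀ t ∈ Ico a b, HasDerivWithinAt B (B' t) (Ici t) t)
    (bound : ∀ t ∈ Ico a b, B t < f t → f' t ≤ B' t) :
    ∀ ⦃t⦄, t ∈ Icc a b → f t ≤ B t := by
  have le_raised (ε : ℝ) (hε : 0 < ε) : ∀ ⦃t⦄, t ∈ Icc a b → f t ≤ B t + ε * (1 + t - a) := by
    refine image_le_of_deriv_right_lt_deriv_boundary' (B' := fun t ↦ B' t + ε) hf hf' ?_ ?_ ?_ ?_
    · linarith
    · fun_prop
    · intro t ht
      have raise_deriv : HasDerivWithinAt (fun s ↦ ε * (1 + s - a)) ε (Ici t) t := by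
        simpa only [id, mul_one] using
          (((hasDerivWithinAt_id t (Ici t)).const_add 1).sub_const a).const_mul ε
      exact (hB' t ht).add raise_deriv
    · intro t ht contact
      have raise_pos : 0 < ε * (1 + t - a) := mul_pos hε (by linarith [ht.1])
      linarith [bound t ht (by linarith)]
  intro t ht
  have scale_pos : 0 < 1 + t - a := by linarith [ht.1]
  refine le_of_forall_pos_le_add fun δ hδ ↦ ?_
  simpa only [div_mul_cancel₀ δ scale_pos.ne'] using le_raised _ (div_pos hδ scale_pos) ht

theorem hasDerivWithinAt_comp_of_hasGradientAt {𝕜 F : Type*} [RCLike 𝕜] [NormedAddCommGroup F]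
    [InnerProductSpace 𝕜 F] [CompleteSpace F] {f : F → 𝕜} {f' : F} {γ : 𝕜 → F} {γ' : F}
    {s : Set 𝕜} {t : 𝕜} (hf : HasGradientAt f f' (γ t)) (hγ : HasDerivWithinAt γ γ' s t) :
    HasDerivWithinAt (f ∘ γ) (inner 𝕜 f' γ') s t := by
  simpa only [InnerProductSpace.toDual_apply_apply] using
    hf.hasFDerivAt.comp_hasDerivWithinAt t hγ

theorem barrier_forward_invariance_general {F : Type*} [NormedAddCommGroup F]
    [InnerProductSpace ℝ F] [CompleteSpace F] {α : ℝ → ℝ} (hα : ∀ s < 0, α s ≤ 0)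
    {b : F → ℝ} {x x' : ℝ → F} {t₀ t₁ : ℝ} (hb : ∀ t ∈ Icc t₀ t₁, DifferentiableAt ℝ b (x t))
    (hx : ContinuousOn x (Icc t₀ t₁))
    (hx' : ∀ t ∈ Ico t₀ t₁, HasDerivWithinAt x (x' t) (Ici t) t)
    (h₀ : 0 ≤ b (x t₀))
    (hbarrier : ∀ t ∈ Ico t₀ t₁, 0 ≤ inner ℝ (gradient b (x t)) (x' t) + α (b (x t))) :
    ∀ t ∈ Icc t₀ t₁, 0 ≤ b (x t) := by
  have bx_cont : ContinuousOn (b ∘ x) (Icc t₀ t₁) := fun t ht ↦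
    (hb t ht).continuousAt.comp_continuousWithinAt (hx t ht)
  have bx_deriv : ∀ t ∈ Ico t₀ t₁,
      HasDerivWithinAt (b ∘ x) (inner ℝ (gradient b (x t)) (x' t)) (Ici t) t := fun t ht ↦
    hasDerivWithinAt_comp_of_hasGradientAt (hb t (Ico_subset_Icc_self ht)).hasGradientAt (hx' t ht)
  have slope_nonneg : ∀ t ∈ Ico t₀ t₁, b (x t) < 0 →
      0 ≤ inner ℝ (gradient b (x t)) (x' t) := fun t ht bx_neg ↦ by
    linarith [hbarrier t ht, hα _ bx_neg]
  exact image_le_of_deriv_right_le_of_boundary_lt continuousOn_const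
    (fun t _ ↦ hasDerivWithinAt_const t (Ici t) 0) h₀ bx_cont bx_deriv slope_nonneg

/-- Barrier invariance: if `b(x(0)) ≥ 0` and `⟪∇b(x(t)), x′(t)⟫ + α(b(x(t))) ≥ 0`
along the trajectory, where `α` is a class-K function (continuous, strictly
increasing, `α(0) = 0`), then `b(x(t)) ≥ 0` for all `t ≥ 0`. -/
theorem barrier_forward_invariance {n : ℕ}
    (α : ℝ → ℝ) (hα_cont : Continuous α) (hα_mono : StrictMono α)
    (hα_zero : α 0 = 0)
    (b : EuclideanSpace ℝ (Fin n) → ℝ) (hb : Differentiable ℝ b)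
    (x : ℝ → EuclideanSpace ℝ (Fin n)) (x' : ℝ → EuclideanSpace ℝ (Fin n))
    (hx : ∀ t ∈ Ici (0 : ℝ), HasDerivWithinAt x (x' t) (Ici (0 : ℝ)) t)
    (h0 : 0 ≤ b (x 0))
    (hbarrier : ∀ t ∈ Ici (0 : ℝ),
      inner ℝ (gradient b (x t)) (x' t) + α (b (x t)) ≥ 0) :
    ∀ t ∈ Ici (0 : ℝ), 0 ≤ b (x t) :=
  fun t ht ↦ barrier_forward_invariance_general (fun _ hs ↦ hα_zero ▸ (hα_mono hs).le)
    (fun _ _ ↦ hb _) (fun s hs ↦ (hx s hs.1).continuousWithinAt.mono Icc_subset_Ici_self)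
    (fun s hs ↦ (hx s hs.1).mono (Ici_subset_Ici.2 hs.1)) h0 (fun s hs ↦ hbarrier s hs.1)
    t (right_mem_Icc.2 ht)
end
end

section
/- Consider a_max > 0, v_max > 0, D_min ∈ ℝ, initial gap D₀, ego initial velocity v₀ with 0 ≤ v₀ ≤ v_max and lead initial velocity v_{l0} with 0 ≤ v_{l0} ≤ v_max, and suppose the control barrier function is negative initially: D₀ − D_min − (v₀² − v_{l0}²)/(2·a_max) < 0. Let the lead vehicle apply maximal braking, i.e., its velocity is v_l(t) = max(v_{l0} − a_max·t, 0). Then for every differentiable ego velocity v : [0, ∞) → ℝ with v(0) = v₀, 0 ≤ v(t) ≤ v_max and |v′(t)| ≤ a_max for all t ≥ 0, there exists a time t ≥ 0 (in fact t = v₀/a_max suffices) at which the gap D(t) = D₀ + ∫₀^t (v_l(s) − v(s)) ds satisfies D(t) < D_min. -/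
open Set intervalIntegral

/-!
A vehicle braking at rate `a` from speed `u` travels at most its stopping distance `u² / (2a)`, and
exactly that distance by time `u / a`. A vehicle whose deceleration never exceeds `a` is at least
as fast as one braking at rate `a` until that time, so the ego vehicle covers at least
`v₀² / (2a)` by time `v₀ / a`, while the fully braking lead vehicle covers at most `vl₀² / (2a)`.
A negative barrier value says precisely that the first distance exceeds the second by more than the
initial margin `D₀ - Dmin`.
-/

theorem integral_max_zero (x : ℝ) : ∫ s in (0 : ℝ)..x, max s 0 = max x 0 ^ 2 / 2 := by
  rcases le_total 0 x with hx | hx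
  · have h_eq : EqOn (fun s : ℝ ↦ max s 0) id (uIcc 0 x) := fun s hs ↦
      max_eq_left (uIcc_of_le hx ▸ hs).1
    simp [integral_congr h_eq, max_eq_left hx]
  · have h_eq : EqOn (fun s : ℝ ↦ max s 0) (fun _ ↦ 0) (uIcc 0 x) := fun s hs ↦
      max_eq_right (uIcc_of_ge hx ▸ hs).2
    simp [integral_congr h_eq, max_eq_right hx]

theorem mul_sub_le_image_sub_of_le_hasDerivWithinAt {s : Set ℝ} (hs : Convex ℝ s) {f f' : ℝ → ℝ}
    {C : ℝ} (hf : ∀ x ∈ s, HasDerivWithinAt f (f' x) s x) (hC : ∀ x ∈ s, C ≤ f' x) {x y : ℝ}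
    (hx : x ∈ s) (hy : y ∈ s) (hxy : x ≤ y) : C * (y - x) ≤ f y - f x := by
  have h_deriv (z : ℝ) (hz : z ∈ s) : HasDerivWithinAt (fun t ↦ f t - C * t) (f' z - C) s z := by
    simpa using (hf z hz).fun_sub ((hasDerivWithinAt_id z s).const_mul C)
  have h_mono : MonotoneOn (fun t ↦ f t - C * t) s :=
    monotoneOn_of_hasDerivWithinAt_nonneg hs (HasDerivWithinAt.continuousOn h_deriv)
      (fun z hz ↦ (h_deriv z (interior_subset hz)).mono interior_subset)
      fun z hz ↦ sub_nonneg.2 (hC z (interior_subset hz))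
  linarith [h_mono hx hy hxy]

/-- The speed at time `t` of a vehicle that brakes at the constant rate `a` from speed `u` at time
`0` and then stays at rest; truncating at `0` encodes that it does not reverse. It serves both as
the lead vehicle's strategy and as a lower bound for the ego vehicle's speed. -/
def brakingSpeed (a u t : ℝ) : ℝ :=
  max (u - a * t) 0

theorem continuous_brakingSpeed (a u : ℝ) : Continuous (brakingSpeed a u) := by
  unfold brakingSpeed
  fun_prop

theorem integral_brakingSpeed {a : ℝ} (ha : a ≠ 0) (u t : ℝ) :
    ∫ s in (0 : ℝ)..t, brakingSpeed a u s =
      (brakingSpeed a u 0 ^ 2 - brakingSpeed a u t ^ 2) / (2 * a) := by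
  have h_int (x y : ℝ) : IntervalIntegrable (fun s : ℝ ↦ max s 0) MeasureTheory.volume x y :=
    (continuous_id.max continuous_const).intervalIntegrable x y
  calc ∫ s in (0 : ℝ)..t, brakingSpeed a u s
      = a⁻¹ * ∫ s in (u - a * t)..(u - a * 0), max s 0 :=
        integral_comp_sub_mul (fun s ↦ max s 0) ha u
    _ = a⁻¹ * (brakingSpeed a u 0 ^ 2 / 2 - brakingSpeed a u t ^ 2 / 2) := by
        rw [← integral_interval_sub_left (h_int 0 _) (h_int 0 _), integral_max_zero,
          integral_max_zero, brakingSpeed, brakingSpeed]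
    _ = (brakingSpeed a u 0 ^ 2 - brakingSpeed a u t ^ 2) / (2 * a) := by
        field_simp

theorem integral_brakingSpeed_le {a : ℝ} (ha : 0 < a) (u t : ℝ) :
    ∫ s in (0 : ℝ)..t, brakingSpeed a u s ≤ u ^ 2 / (2 * a) := by
  have h_init : brakingSpeed a u 0 ^ 2 ≤ u ^ 2 :=
    sq_le_sq.2 (by simpa [brakingSpeed] using abs_max_le_max_abs_abs (a := u) (b := 0))
  rw [integral_brakingSpeed ha.ne']
  gcongr
  linarith [sq_nonneg (brakingSpeed a u t)]

theorem integral_brakingSpeed_div {a u : ℝ} (ha : a ≠ 0) (hu : 0 ≤ u) :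
    ∫ s in (0 : ℝ)..u / a, brakingSpeed a u s = u ^ 2 / (2 * a) := by
  have h_init : brakingSpeed a u 0 = u := by simp [brakingSpeed, hu]
  have h_rest : brakingSpeed a u (u / a) = 0 := by simp [brakingSpeed, mul_div_cancel₀ u ha]
  rw [integral_brakingSpeed ha, h_init, h_rest]
  ring

section DecelerationBound

variable {a : ℝ} {v v' : ℝ → ℝ}

theorem brakingSpeed_le_of_neg_le_deriv (ha : 0 < a)
    (hv : ∀ t ∈ Icc 0 (v 0 / a), HasDerivWithinAt v (v' t) (Icc 0 (v 0 / a)) t)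
    (hv' : ∀ t ∈ Icc 0 (v 0 / a), -a ≤ v' t) {t : ℝ} (ht : t ∈ Icc 0 (v 0 / a)) :
    brakingSpeed a (v 0) t ≤ v t := by
  have h_linear : v 0 - a * t ≤ v t := by
    linarith [mul_sub_le_image_sub_of_le_hasDerivWithinAt (convex_Icc _ _) hv hv'
      (left_mem_Icc.2 (ht.1.trans ht.2)) ht ht.1]
  have h_moving : 0 ≤ v 0 - a * t := sub_nonneg.2 ((le_div_iff₀' ha).1 ht.2)
  exact max_le h_linear (h_moving.trans h_linear)

theorem sq_div_le_integral_of_neg_le_deriv (ha : 0 < a) (hv0 : 0 ≤ v 0)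
    (hv : ∀ t ∈ Icc 0 (v 0 / a), HasDerivWithinAt v (v' t) (Icc 0 (v 0 / a)) t)
    (hv' : ∀ t ∈ Icc 0 (v 0 / a), -a ≤ v' t) :
    v 0 ^ 2 / (2 * a) ≤ ∫ s in (0 : ℝ)..v 0 / a, v s := by
  have hT : 0 ≤ v 0 / a := div_nonneg hv0 ha.le
  rw [← integral_brakingSpeed_div ha.ne' hv0]
  exact integral_mono_on hT ((continuous_brakingSpeed a (v 0)).intervalIntegrable _ _)
    ((HasDerivWithinAt.continuousOn hv).intervalIntegrable_of_Icc hT)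
    fun t ht ↦ brakingSpeed_le_of_neg_le_deriv ha hv hv' ht

end DecelerationBound

theorem acc_cbf_neg_implies_unsafe_general
    {amax Dmin D₀ v₀ vl₀ : ℝ} (hamax : 0 < amax) (hv₀ : 0 ≤ v₀)
    (hb0 : D₀ - Dmin - (v₀ ^ 2 - vl₀ ^ 2) / (2 * amax) < 0)
    {vl : ℝ → ℝ} (hvl : ∀ t, vl t = max (vl₀ - amax * t) 0)
    {v v' : ℝ → ℝ} (hv0 : v 0 = v₀)
    (hv_deriv : ∀ t ∈ Icc 0 (v₀ / amax), HasDerivWithinAt v (v' t) (Icc 0 (v₀ / amax)) t)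
    (hv_decel : ∀ t ∈ Icc 0 (v₀ / amax), -amax ≤ v' t)
    {D : ℝ → ℝ} (hD : ∀ t, D t = D₀ + ∫ s in (0 : ℝ)..t, (vl s - v s)) :
    D (v₀ / amax) < Dmin := by
  obtain rfl : vl = brakingSpeed amax vl₀ := funext hvl
  subst hv0
  have hv_int : IntervalIntegrable v MeasureTheory.volume 0 (v 0 / amax) :=
    (HasDerivWithinAt.continuousOn hv_deriv).intervalIntegrable_of_Icc (div_nonneg hv₀ hamax.le)
  calc D (v 0 / amax)
      = D₀ + ((∫ s in (0 : ℝ)..v 0 / amax, brakingSpeed amax vl₀ s) -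
          ∫ s in (0 : ℝ)..v 0 / amax, v s) := by
        rw [hD, integral_sub ((continuous_brakingSpeed amax vl₀).intervalIntegrable _ _) hv_int]
    _ ≤ D₀ + (vl₀ ^ 2 / (2 * amax) - v 0 ^ 2 / (2 * amax)) := by
        gcongr
        · exact integral_brakingSpeed_le hamax vl₀ _
        · exact sq_div_le_integral_of_neg_le_deriv hamax hv₀ hv_deriv hv_decel
    _ < Dmin := by
        rw [sub_div] at hb0
        linarith

/-- ACC unsafety when the control barrier function is negative: if
`b = D − D_min − (v² − v_l²)/(2 a_max) < 0` initially, then maximal braking of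
the lead vehicle forces a violation of the safety constraint `D ≥ D_min` for
every admissible ego-vehicle behavior. -/
theorem acc_cbf_neg_implies_unsafe
    (amax vmax Dmin D₀ v₀ vl₀ : ℝ) (hamax : 0 < amax) (hvmax : 0 < vmax)
    (hv₀ : 0 ≤ v₀) (hv₀max : v₀ ≤ vmax)
    (hvl₀ : 0 ≤ vl₀) (hvl₀max : vl₀ ≤ vmax)
    (hb0 : D₀ - Dmin - (v₀ ^ 2 - vl₀ ^ 2) / (2 * amax) < 0)
    (vl : ℝ → ℝ) (hvl : ∀ t, vl t = max (vl₀ - amax * t) 0)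
    (v v' : ℝ → ℝ)
    (hv0 : v 0 = v₀)
    (hv_deriv : ∀ t ∈ Ici (0 : ℝ), HasDerivWithinAt v (v' t) (Ici (0 : ℝ)) t)
    (hv_bounds : ∀ t ∈ Ici (0 : ℝ), 0 ≤ v t ∧ v t ≤ vmax)
    (hv_accel : ∀ t ∈ Ici (0 : ℝ), |v' t| ≤ amax)
    (D : ℝ → ℝ) (hD : ∀ t, D t = D₀ + ∫ s in (0 : ℝ)..t, (vl s - v s)) :
    ∃ t ∈ Ici (0 : ℝ), D t < Dmin :=
  ⟨v₀ / amax, div_nonneg hv₀ hamax.le,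
    acc_cbf_neg_implies_unsafe_general hamax hv₀ hb0 hvl hv0
      (fun t ht ↦ (hv_deriv t ht.1).mono Icc_subset_Ici_self)
      (fun t ht ↦ neg_le_of_abs_le (hv_accel t ht.1)) hD⟩
end
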